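/- Assume in addition that f is C² and x is C³ in (α,ε). Then x₂(α) := (1/2) ∂²_ε x_ε(α)|_{ε=0} satisfies x₂(α) = A(α)^{−1} [ x₁′(α) − (1/2) D²_x f(x₀(α), α)(x₁(α), x₁(α)) ] for every α ∈ ℝ, where x₁(α) = A(α)^{−1} x₀′(α) and D²_x f(x₀(α), α) is the second derivative of f in x at (x₀(α), α) viewed as a symmetric bilinear map. -/

import Mathlib

/-- second-order coefficient of the slow manifold.  Let `f` be `C²`, let
`(α,ε) ↦ x_ε(α)` be a `C³` family satisfying `ε ∂_α x_ε(α) = f(x_ε(α),α)` for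
`ε ∈ [0,ε₀)`, with `f(x₀(α),α) = 0` and `A(α) := D_x f(x₀(α),α)` invertible.  Then
`x₂(α) := (1/2) ∂²_ε x_ε(α)|_{ε=0}` satisfies
`x₂(α) = A(α)⁻¹ [ x₁′(α) − (1/2) D²_x f(x₀(α),α)(x₁(α),x₁(α)) ]` for every `α`, where
`x₁(α) = A(α)⁻¹ x₀′(α)`. -/
theorem stmt_15 {n : ℕ}
    (f : EuclideanSpace ℝ (Fin n) → ℝ → EuclideanSpace ℝ (Fin n))
    (hfC : ContDiff ℝ 2 fun p : EuclideanSpace ℝ (Fin n) × ℝ => f p.1 p.2)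
    (ε₀ : ℝ) (hε₀ : 0 < ε₀)
    (x : ℝ → ℝ → EuclideanSpace ℝ (Fin n))
    (hxC3 : ContDiffOn ℝ 3 (fun p : ℝ × ℝ => x p.1 p.2) (Set.univ ×ˢ Set.Ico 0 ε₀))
    (hode : ∀ ε ∈ Set.Ico (0 : ℝ) ε₀, ∀ α : ℝ,
      ε • deriv (fun β => x β ε) α = f (x α ε) α)
    (heq : ∀ α : ℝ, f (x α 0) α = 0)
    (hinv : ∀ α : ℝ, ∃ e : EuclideanSpace ℝ (Fin n) ≃L[ℝ] EuclideanSpace ℝ (Fin n),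
      (e : EuclideanSpace ℝ (Fin n) →L[ℝ] EuclideanSpace ℝ (Fin n))
        = fderiv ℝ (fun y => f y α) (x α 0)) :
    ∀ α : ℝ, (1 / 2 : ℝ) • iteratedDerivWithin 2 (fun ε => x α ε) (Set.Ico 0 ε₀) 0
      = (fderiv ℝ (fun y => f y α) (x α 0)).inverse
        (deriv (fun β => (fderiv ℝ (fun y => f y β) (x β 0)).inverse
            (deriv (fun γ => x γ 0) β)) α
          - (1 / 2 : ℝ) • (fderiv ℝ (fun y => fderiv ℝ (fun z => f z α) y) (x α 0)
              ((fderiv ℝ (fun y => f y α) (x α 0)).inverse (deriv (fun γ => x γ 0) α)))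
            ((fderiv ℝ (fun y => f y α) (x α 0)).inverse (deriv (fun γ => x γ 0) α))) := by
  classical
  set S : Set (ℝ × ℝ) := Set.univ ×ˢ Set.Ico 0 ε₀ with hS
  set I : Set ℝ := Set.Ico 0 ε₀ with hI
  set X : ℝ × ℝ → EuclideanSpace ℝ (Fin n) := fun p => x p.1 p.2 with hX
  have hIu : UniqueDiffOn ℝ I := uniqueDiffOn_Ico 0 ε₀
  have hSu : UniqueDiffOn ℝ S := uniqueDiffOn_univ.prod hIu
  have h0 : (0 : ℝ) ∈ I := ⟨le_refl _, hε₀⟩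
  have hmem : ∀ α : ℝ, ∀ ε ∈ I, (α, ε) ∈ S := fun α ε h => ⟨Set.mem_univ _, h⟩
  set D := fderivWithin ℝ X S with hD
  have hDC : ContDiffOn ℝ 2 D S := hxC3.fderivWithin hSu (by norm_num)
  set D2 := fderivWithin ℝ D S with hD2
  have hD2C : ContDiffOn ℝ 1 D2 S := hDC.fderivWithin hSu (by norm_num)
  have hXd : ∀ p ∈ S, HasFDerivWithinAt X (D p) S p := fun p hp =>
    ((hxC3.differentiableOn (by norm_num)) p hp).hasFDerivWithinAt
  have hDd : ∀ p ∈ S, HasFDerivWithinAt D (D2 p) S p := fun p hp =>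
    ((hDC.differentiableOn (by norm_num)) p hp).hasFDerivWithinAt
  -- the two coordinate lines
  have lineA : ∀ α ε : ℝ, HasDerivWithinAt (fun β : ℝ => (β, ε)) ((1 : ℝ), (0 : ℝ)) Set.univ α :=
    fun α ε => ((hasDerivAt_id α).prodMk (hasDerivAt_const α ε)).hasDerivWithinAt
  have lineE : ∀ α ε : ℝ, HasDerivWithinAt (fun e : ℝ => (α, e)) ((0 : ℝ), (1 : ℝ)) I ε :=
    fun α ε => ((hasDerivAt_const ε α).prodMk (hasDerivAt_id ε)).hasDerivWithinAt
  have hxA : ∀ α : ℝ, ∀ ε ∈ I, HasDerivAt (fun β => x β ε) (D (α, ε) (1, 0)) α := by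
    intro α ε h
    have := (hXd _ (hmem α ε h)).comp_hasDerivWithinAt α (lineA α ε) (fun β _ => hmem β ε h)
    exact hasDerivWithinAt_univ.1 this
  have hxE : ∀ α : ℝ, ∀ ε ∈ I, HasDerivWithinAt (fun e => x α e) (D (α, ε) (0, 1)) I ε := by
    intro α ε h
    exact (hXd _ (hmem α ε h)).comp_hasDerivWithinAt ε (lineE α ε) (fun e he => hmem α e he)
  have hDE : ∀ α : ℝ, ∀ ε ∈ I, HasDerivWithinAt (fun e => D (α, e)) (D2 (α, ε) (0, 1)) I ε := by
    intro α ε h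
    exact (hDd _ (hmem α ε h)).comp_hasDerivWithinAt ε (lineE α ε) (fun e he => hmem α e he)
  have hDA : ∀ α : ℝ, HasDerivAt (fun β => D (β, 0)) (D2 (α, 0) (1, 0)) α := by
    intro α
    have := (hDd _ (hmem α 0 h0)).comp_hasDerivWithinAt α (lineA α 0) (fun β _ => hmem β 0 h0)
    exact hasDerivWithinAt_univ.1 this
  have happ : ∀ (α ε : ℝ) (w : ℝ × ℝ), ε ∈ I →
      HasDerivWithinAt (fun e => D (α, e) w) (D2 (α, ε) (0, 1) w) I ε := by
    intro α ε w h
    simpa using (hDE α ε h).clm_apply (hasDerivWithinAt_const ε I w)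
  -- symmetry
  have hsymm : ∀ α : ℝ, D2 (α, 0) (0, 1) (1, 0) = D2 (α, 0) (1, 0) (0, 1) := by
    intro α
    have hcl : (α, (0 : ℝ)) ∈ closure (interior S) := by
      rw [hS, interior_prod_eq, closure_prod_eq, interior_univ, closure_univ, hI, interior_Ico,
        closure_Ioo hε₀.ne]
      exact ⟨Set.mem_univ _, le_refl _, hε₀.le⟩
    have h := (hxC3 _ (hmem α 0 h0)).isSymmSndFDerivWithinAt (by simp; norm_num) hSu hcl
      (hmem α 0 h0)
    exact h _ _
  have hFC : ∀ α : ℝ, ContDiff ℝ 2 (fun y => f y α) := fun α =>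
    hfC.comp (contDiff_id.prodMk contDiff_const)
  -- first-order identity
  have hfirst : ∀ α : ℝ, ∀ ε ∈ I, D (α, ε) (1, 0) + ε • D2 (α, ε) (0, 1) (1, 0)
      = fderiv ℝ (fun y => f y α) (x α ε) (D (α, ε) (0, 1)) := by
    intro α ε h
    have h1 := (hasDerivWithinAt_id ε I).smul (happ α ε (1, 0) h)
    have h2 : HasDerivWithinAt (fun e => f (x α e) α)
        (fderiv ℝ (fun y => f y α) (x α ε) (D (α, ε) (0, 1))) I ε :=
      ((hFC α).differentiable (by norm_num) (x α ε)).hasFDerivAt.comp_hasDerivWithinAt ε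
        (hxE α ε h)
    have h3 := h2.congr (f₁ := fun e => id e • D (α, e) (1, 0)) (fun e he => by
      simp only [id]; rw [← hode e he α, (hxA α e he).deriv]) (by
      simp only [id]; rw [← hode ε h α, (hxA α ε h).deriv])
    have h4 := (hIu ε h).eq_deriv _ h1 h3
    rw [← h4]
    simp [add_comm]
  have hinvA : ∀ α : ℝ, ∀ u w, u = fderiv ℝ (fun y => f y α) (x α 0) w →
      (fderiv ℝ (fun y => f y α) (x α 0)).inverse u = w := by
    intro α u w h
    obtain ⟨e, he⟩ := hinv α
    rw [h, ← he, ContinuousLinearMap.inverse_equiv]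
    simp
  have hx1 : ∀ α : ℝ, (fderiv ℝ (fun y => f y α) (x α 0)).inverse (deriv (fun γ => x γ 0) α)
      = D (α, 0) (0, 1) := by
    intro α
    apply hinvA
    rw [(hxA α 0 h0).deriv, ← hfirst α 0 h0]
    simp
  intro α
  have hfun : (fun β => (fderiv ℝ (fun y => f y β) (x β 0)).inverse (deriv (fun γ => x γ 0) β))
      = fun β => D (β, 0) (0, 1) := funext hx1
  have hx1' : HasDerivAt (fun β => D (β, 0) (0, 1)) (D2 (α, 0) (1, 0) (0, 1)) α := by
    simpa using (hDA α).clm_apply (hasDerivAt_const α ((0 : ℝ), (1 : ℝ)))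
  rw [hfun, hx1'.deriv, hx1 α]
  have hit : iteratedDerivWithin 2 (fun ε => x α ε) I 0 = D2 (α, 0) (0, 1) (0, 1) := by
    rw [iteratedDerivWithin_succ]
    have hc : Set.EqOn (iteratedDerivWithin 1 (fun ε => x α ε) I) (fun e => D (α, e) (0, 1)) I := by
      intro e he
      rw [iteratedDerivWithin_one]
      exact (hxE α e he).derivWithin (hIu e he)
    rw [derivWithin_congr hc (hc h0)]
    exact (happ α 0 (0, 1) h0).derivWithin (hIu 0 h0)
  rw [hit]
  symm
  apply hinvA
  -- second-order identity
  have hWd : DifferentiableWithinAt ℝ (fun p => D2 p (0, 1) (1, 0)) S (α, 0) :=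
    (((hD2C.clm_apply contDiffOn_const).clm_apply contDiffOn_const).differentiableOn
      (by norm_num)) _ (hmem α 0 h0)
  have hw := hWd.hasFDerivWithinAt.comp_hasDerivWithinAt 0 (lineE α 0)
    (fun e he => hmem α e he)
  have hL := (happ α 0 (1, 0) h0).add ((hasDerivWithinAt_id 0 I).smul hw)
  have hF' : HasFDerivAt (fun y => fderiv ℝ (fun z => f z α) y)
      (fderiv ℝ (fun y => fderiv ℝ (fun z => f z α) y) (x α 0)) (x α 0) :=
    (((hFC α).fderiv_right (m := 1) (by norm_num)).differentiable (by norm_num) _).hasFDerivAt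
  have hR := (hF'.comp_hasDerivWithinAt 0 (hxE α 0 h0)).clm_apply (happ α 0 (0, 1) h0)
  have hL' := hR.congr_of_eventuallyEq_of_mem (f₁ := _)
    (Filter.eventuallyEq_of_mem self_mem_nhdsWithin (fun e he => hfirst α e he)) h0
  have key := (hIu 0 h0).eq_deriv _ hL hL'
  simp only [id, zero_smul, zero_add, one_smul, Function.comp] at key
  rw [hsymm α] at key
  rw [map_smul, ← sub_eq_zero]
  rw [← sub_eq_zero] at key
  have : ∀ a b c : EuclideanSpace ℝ (Fin n), a + a - (b + c) = 0 →
      a - (1 / 2 : ℝ) • b - (1 / 2 : ℝ) • c = 0 := by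
    intro a b c h
    have : a - (1 / 2 : ℝ) • b - (1 / 2 : ℝ) • c = (1 / 2 : ℝ) • (a + a - (b + c)) := by module
    rw [this, h, smul_zero]
  exact this _ _ _ key
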